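/- Let X be a nonempty closed spherically convex subset of S^d. Then (X°, −(X°)) is the largest pair separated by X ∪ (−X): namely X = 𝒞(X°, −(X°)), and for any subsets W₁, W₂ ⊆ S^d with X = 𝒞(W₁,W₂) one has W₁ ⊆ X° and W₂ ⊆ −(X°). -/

import Mathlib

open scoped RealInnerProductSpace Pointwise

noncomputable section

/-- Euclidean space `ℝ^{d+1}`. -/
abbrev E (d : ℕ) : Type := EuclideanSpace ℝ (Fin (d + 1))

/-- The unit sphere `S^d ⊆ ℝ^{d+1}`. -/
def sph (d : ℕ) : Set (E d) := {x | ‖x‖ = 1}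

/-- The closed hemisphere `H(P)` centered at `P`. -/
def hemi {d : ℕ} (P : E d) : Set (E d) := {Q ∈ sph d | 0 ≤ ⟪P, Q⟫}

/-- The spherical polar set `W°`. -/
def polar {d : ℕ} (W : Set (E d)) : Set (E d) := {Q ∈ sph d | ∀ P ∈ W, 0 ≤ ⟪P, Q⟫}

/-- The semi-separation center set `𝒞(W₁, W₂)`. -/
def ssc {d : ℕ} (W₁ W₂ : Set (E d)) : Set (E d) :=
  {P ∈ sph d | (∀ Q ∈ W₁, 0 ≤ ⟪P, Q⟫) ∧ ∀ R ∈ W₂, ⟪P, R⟫ ≤ 0}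

/-- `W ⊆ S^d` is hemispherical if it misses some closed hemisphere. -/
def hemispherical {d : ℕ} (W : Set (E d)) : Prop := ∃ P ∈ sph d, W ∩ hemi P = ∅

/-- A hemispherical set is spherically convex if it contains the normalized segment
between any two of its points. -/
def sphConvex {d : ℕ} (W : Set (E d)) : Prop :=
  hemispherical W ∧ ∀ P ∈ W, ∀ Q ∈ W, ∀ t : ℝ, t ∈ Set.Icc (0 : ℝ) 1 →
    (‖t • P + (1 - t) • Q‖)⁻¹ • (t • P + (1 - t) • Q) ∈ W

/-- The spherical convex hull `s-conv(W)`: normalized convex combinations of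
finitely many points of `W`. -/
def sconv {d : ℕ} (W : Set (E d)) : Set (E d) :=
  {x | ∃ (n : ℕ) (P : Fin n → E d) (l : Fin n → ℝ),
    (∀ i, P i ∈ W) ∧ (∀ i, 0 ≤ l i) ∧ (∑ i, l i) = 1 ∧
    x = (‖∑ i, l i • P i‖)⁻¹ • (∑ i, l i • P i)}


/-- The cone over a nonempty closed spherically convex set. -/
def coneOver {d : ℕ} (X : Set (E d)) (hX : X ⊆ sph d) (hne : X.Nonempty)
    (hcl : IsClosed X) (hcv : sphConvex X) : ProperCone ℝ (E d) where
  carrier := {v | ∃ x ∈ X, v = ‖v‖ • x}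
  zero_mem' := by
    obtain ⟨x, hx⟩ := hne
    exact ⟨x, hx, by simp⟩
  smul_mem' := by
    rintro ⟨c, hc⟩ v ⟨x, hx, hv⟩
    refine ⟨x, hx, ?_⟩
    change c • v = ‖c • v‖ • x
    rw [norm_smul, Real.norm_of_nonneg hc, mul_smul, ← hv]
  add_mem' := by
    rintro u v ⟨x, hx, hu⟩ ⟨y, hy, hv⟩
    have ha := norm_nonneg u
    have hb := norm_nonneg v
    rcases (add_nonneg ha hb).eq_or_lt with h0 | hpos
    · have hu0 : u = 0 := norm_eq_zero.1 (by linarith)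
      exact ⟨x, hx, by
        have hv0 : v = 0 := norm_eq_zero.1 (by linarith)
        simp [hu0, hv0]⟩
    · have hz := hcv.2 x hx y hy (‖u‖ / (‖u‖ + ‖v‖))
        ⟨by positivity, by rw [div_le_one hpos]; linarith⟩
      set w := (‖u‖ / (‖u‖ + ‖v‖)) • x + (1 - ‖u‖ / (‖u‖ + ‖v‖)) • y with hw
      have huv : u + v = (‖u‖ + ‖v‖) • w := by
        rw [hw, smul_add, smul_smul, smul_smul]
        have h1 : (‖u‖ + ‖v‖) * (‖u‖ / (‖u‖ + ‖v‖)) = ‖u‖ := by field_simp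
        have h2 : (‖u‖ + ‖v‖) * (1 - ‖u‖ / (‖u‖ + ‖v‖)) = ‖v‖ := by
          rw [mul_sub, h1]; ring
        rw [h1, h2, ← hu, ← hv]
      refine ⟨_, hz, ?_⟩
      rw [huv, norm_smul, Real.norm_of_nonneg hpos.le, smul_smul]
      by_cases hw0 : w = 0
      · simp [hw0]
      · have : ‖w‖ ≠ 0 := norm_ne_zero_iff.2 hw0
        congr 1
        field_simp
  isClosed' := by
    have hXc : IsCompact X := (isCompact_sphere (0 : E d) 1).of_isClosed_subset hcl
      (fun x hx => mem_sphere_zero_iff_norm.2 (hX hx))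
    have : CompactSpace X := isCompact_iff_compactSpace.1 hXc
    have h1 : IsClosed {p : E d × X | p.1 = ‖p.1‖ • (p.2 : E d)} :=
      isClosed_eq (by fun_prop) (by fun_prop)
    have h2 := isClosedMap_fst_of_compactSpace _ h1
    convert h2 using 1
    ext v
    simp

/-- `(X°, −X°)` is the largest pair separated by `X ∪ (−X)`:
`X = 𝒞(X°, −X°)`, and whenever `X = 𝒞(W₁,W₂)`, one has `W₁ ⊆ X°`, `W₂ ⊆ −X°`. -/
theorem stmt_11 (d : ℕ) (X : Set (E d)) (hX : X ⊆ sph d) (hne : X.Nonempty)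
    (hcl : IsClosed X) (hcv : sphConvex X) :
    X = ssc (polar X) (-(polar X)) ∧
      ∀ W₁ W₂ : Set (E d), W₁ ⊆ sph d → W₂ ⊆ sph d →
        X = ssc W₁ W₂ → W₁ ⊆ polar X ∧ W₂ ⊆ -(polar X) := by
  refine ⟨?_, ?_⟩
  · apply Set.Subset.antisymm
    · intro x hx
      refine ⟨hX hx, fun Q hQ => hQ.2 x hx, fun R hR => ?_⟩
      have := (Set.mem_neg.1 hR).2 x hx
      rw [inner_neg_right] at this
      linarith
    · rintro P ⟨hP, hP1, -⟩
      by_contra hPX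
      have hP' : ‖P‖ = 1 := hP
      have hmem : P ∉ coneOver X hX hne hcl hcv := by
        rintro ⟨x, hx, h⟩
        rw [hP', one_smul] at h
        exact hPX (h ▸ hx)
      obtain ⟨y, hy, hy0⟩ := (coneOver X hX hne hcl hcv).hyperplane_separation' hmem
      have hyne : y ≠ 0 := by
        rintro rfl
        simp at hy0
      have hypos : 0 < ‖y‖ := norm_pos_iff.2 hyne
      have := hP1 (‖y‖⁻¹ • y) ⟨by
          change ‖‖y‖⁻¹ • y‖ = 1
          rw [norm_smul, norm_inv, norm_norm, inv_mul_cancel₀ hypos.ne'], fun x hx => by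
          rw [inner_smul_right]
          refine mul_nonneg (by positivity) (hy x ⟨x, hx, ?_⟩)
          have : ‖x‖ = 1 := hX hx
          rw [this, one_smul]⟩
      rw [inner_smul_right] at this
      have h3 := mul_neg_of_pos_of_neg (inv_pos.2 hypos) hy0
      linarith
  · intro W₁ W₂ h1 h2 h
    refine ⟨fun Q hQ => ⟨h1 hQ, fun P hP => ?_⟩, fun R hR => Set.mem_neg.2 ⟨?_, fun P hP => ?_⟩⟩
    · rw [h] at hP
      exact hP.2.1 Q hQ
    · change ‖-R‖ = 1
      rw [norm_neg]
      exact h2 hR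
    · rw [h] at hP
      rw [inner_neg_right]
      have := hP.2.2 R hR
      linarith
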